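/- If the nonnegative integer n satisfies n ≡ 0 (mod 4), then the overpartition number satisfies p̄(4n) ≡ (−1)ⁿ p̄(n) (mod 128). -/

import Mathlib

/-!
Let `φ(q) = ∑_{k ∈ ℤ} q^(k²) = 1 + 2T`, with `T = ∑_{k ≥ 1} q^(k²)`. By Gauss's identity
`∏ (1 - qⁱ) / (1 + qⁱ) = φ(-q)`, the series `Q(q) = ∑ (-1)ⁿ p̄(n) qⁿ` is the inverse of `φ(q)`
(`overpartitionSeries_mul`, up to `q ↦ -q`). Gauss's identity is obtained as the limit of the finite
identity `gauss_finite`, whose induction step telescopes.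

Split `T = E + O` into even and odd squares. Then `φ(q) = φ(q⁴) + 2O`, so with `P(q) = Q(q⁴)`, the
inverse of `φ(q⁴) = 1 + 2E`, one has `Q = ∑ᵢ (-2)ⁱ Oⁱ Pⁱ⁺¹`, where modulo `128` only `i ≤ 6` matters.
The term `i = 0` contributes `(-1)ⁿ p̄(n)` at the exponent `4n`. Since `P` has exponents divisible by
`4` and those of `O` are `1` modulo `4`, the only other term with exponents divisible by `4` is
`16 O⁴ P⁵`. Modulo `8` the factor `P⁵` is `(1 + 2E)³`, and
`eight_dvd_coeff_oddSquares_pow_four_mul` shows that the coefficients of `O⁴ (1 + 2E)³` at exponents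
divisible by `16` are multiples of `8`: odd squares are `1` or `9` modulo `16`, and four of them sum
to `12` modulo `16` only when exactly one or exactly three of them are `9`, so these quadruples come
in fours.
-/

/-- The number of overpartitions of `n`: pairs `(μ, λ)` where `μ` is a partition of some
`m ≤ n` into distinct parts and `λ` is a partition of `n - m`. -/
def overpartition (n : ℕ) : ℕ :=
  ∑ m ∈ Finset.range (n + 1),
    (Nat.Partition.distincts m).card * Fintype.card (Nat.Partition (n - m))

open PowerSeries Finset

/-! ### Gauss's identity -/

section Gauss

variable {R : Type*} [CommRing R]

/-- The quotient `∏_{s < i ≤ n} (1 - xⁱ) / (1 + xⁱ)`, where `w i` plays the role of the inverse of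
`1 + x ^ (i + 1)`. -/
def gaussProd (x : R) (w : ℕ → R) (s n : ℕ) : R :=
  ∏ i ∈ Ico s n, (1 - x ^ (i + 1)) * w i

lemma gaussProd_self (x : R) (w : ℕ → R) (n : ℕ) : gaussProd x w n n = 1 := by
  simp [gaussProd]

lemma gaussProd_succ_right (x : R) (w : ℕ → R) {s n : ℕ} (h : s ≤ n) :
    gaussProd x w s (n + 1) = gaussProd x w s n * ((1 - x ^ (n + 1)) * w n) :=
  prod_Ico_succ_top h _

lemma gaussProd_eq_mul_left (x : R) (w : ℕ → R) {s n : ℕ} (h : s < n) :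
    gaussProd x w s n = (1 - x ^ (s + 1)) * w s * gaussProd x w (s + 1) n :=
  prod_eq_prod_Ico_succ_bot h _

/-- The telescoping step behind `gauss_finite`: replacing `n` by `n + 1` changes the first `m`
correction terms by a single monomial multiple of `gaussProd x w m n`. -/
lemma gauss_telescope (x : R) (w : ℕ → R) (hw : ∀ i, (1 + x ^ (i + 1)) * w i = 1) (n m : ℕ)
    (hm : m ≤ n) :
    (gaussProd x w 0 (n + 1) + 2 * ∑ k ∈ range m,
        (-1) ^ (k + 1) * w k * gaussProd x w (k + 1) (n + 1) * x ^ ((k + 1) * (n + 2))) -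
      (gaussProd x w 0 n + 2 * ∑ k ∈ range m,
        (-1) ^ (k + 1) * w k * gaussProd x w (k + 1) n * x ^ ((k + 1) * (n + 1))) =
      2 * w n * ((-1) ^ (m + 1) * gaussProd x w m n * x ^ ((m + 1) * (n + 1))) := by
  induction m with
  | zero =>
    rw [gaussProd_succ_right x w (Nat.zero_le n)]
    simp only [range_zero, sum_empty, zero_add, one_mul, pow_one]
    linear_combination gaussProd x w 0 n * hw n
  | succ m ih =>
    have ih := ih (by omega)
    rw [gaussProd_eq_mul_left x w (by omega : m < n)] at ih
    rw [sum_range_succ, sum_range_succ, gaussProd_succ_right x w hm]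
    have e1 : x ^ ((m + 1) * (n + 2)) = x ^ ((m + 1) * (n + 1)) * x ^ (m + 1) := by
      rw [← pow_add]; congr 1
    have e2 : x ^ ((m + 1 + 1) * (n + 1)) = x ^ ((m + 1) * (n + 1)) * x ^ (n + 1) := by
      rw [← pow_add]; congr 1; ring
    rw [e1, e2, pow_succ (-1 : R) (m + 1)]
    generalize gaussProd x w (m + 1) n = r at *
    generalize x ^ ((m + 1) * (n + 1)) = z at *
    have hwm := hw m
    have hwn := hw n
    generalize x ^ (m + 1) = y at *
    generalize x ^ (n + 1) = q at *
    generalize (-1 : R) ^ (m + 1) = e at *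
    linear_combination ih + 2 * e * r * z * w m * hwn - 2 * e * r * z * q * w n * hwm

/-- A finite form of Gauss's identity `∑ (-1)ᵏ x^(k²) = ∏ (1 - xⁱ) / (1 + xⁱ)`, in the style of
Shanks: the truncated theta series equals the truncated product up to explicit terms divisible by
`x ^ (n + 1)`. -/
lemma gauss_finite (x : R) (w : ℕ → R) (hw : ∀ i, (1 + x ^ (i + 1)) * w i = 1) (n : ℕ) :
    1 + 2 * ∑ k ∈ range n, (-1) ^ (k + 1) * x ^ ((k + 1) ^ 2) =
      gaussProd x w 0 n + 2 * ∑ k ∈ range n,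
        (-1) ^ (k + 1) * w k * gaussProd x w (k + 1) n * x ^ ((k + 1) * (n + 1)) := by
  induction n with
  | zero => simp [gaussProd]
  | succ n ih =>
    have h := gauss_telescope x w hw n n le_rfl
    rw [sum_range_succ, sum_range_succ, gaussProd_self]
    rw [gaussProd_self] at h
    have e1 : x ^ ((n + 1) * (n + 1 + 1)) = x ^ ((n + 1) ^ 2) * x ^ (n + 1) := by
      rw [← pow_add]; congr 1; ring
    have e2 : x ^ ((n + 1) * (n + 1)) = x ^ ((n + 1) ^ 2) := by
      congr 1; ring
    rw [e2] at h
    rw [e1]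
    linear_combination ih - h - 2 * (-1) ^ (n + 1) * x ^ ((n + 1) ^ 2) * hw n

end Gauss

/-- `∑_{k ≥ 1} q^(k²)`. -/
noncomputable def squareSeries : ℤ⟦X⟧ :=
  PowerSeries.mk fun n ↦ if 0 < n ∧ IsSquare n then 1 else 0

/-- `∑_{n ≥ 0} p̄(n) qⁿ`. -/
noncomputable def overpartitionSeries : ℤ⟦X⟧ :=
  PowerSeries.mk fun n ↦ (overpartition n : ℤ)

/-- Gauss's identity modulo `q ^ (n + 1)`, with denominators cleared. -/
lemma gauss_dvd (n : ℕ) :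
    (X : ℤ⟦X⟧) ^ (n + 1) ∣
      (1 + 2 * ∑ k ∈ range n, (-1) ^ (k + 1) * X ^ ((k + 1) ^ 2)) *
        (∏ i ∈ range n, (1 + X ^ (i + 1))) - ∏ i ∈ range n, (1 - X ^ (i + 1)) := by
  have hu (i : ℕ) : ∃ v : ℤ⟦X⟧, (1 + X ^ (i + 1)) * v = 1 := by
    apply IsUnit.exists_right_inv
    rw [PowerSeries.isUnit_iff_constantCoeff]
    simp
  choose w hw using hu
  have hprod : gaussProd (X : ℤ⟦X⟧) w 0 n * ∏ i ∈ range n, (1 + X ^ (i + 1)) =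
      ∏ i ∈ range n, (1 - X ^ (i + 1)) := by
    rw [gaussProd, Nat.Ico_zero_eq_range, ← prod_mul_distrib]
    refine prod_congr rfl fun i _ ↦ ?_
    linear_combination (1 - X ^ (i + 1)) * hw i
  rw [gauss_finite X w hw n, add_mul, hprod, add_sub_cancel_left, mul_assoc]
  refine Dvd.dvd.mul_left (Dvd.dvd.mul_right (dvd_sum fun k _ ↦ Dvd.dvd.mul_left ?_ _) _) _
  exact pow_dvd_pow _ (Nat.le_mul_of_pos_left _ (Nat.succ_pos k))

lemma coeff_theta_partial (d n : ℕ) (h : d ≤ n) :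
    coeff d ((1 : ℤ⟦X⟧) + 2 * ∑ k ∈ range n, (-1) ^ (k + 1) * X ^ ((k + 1) ^ 2)) =
      coeff d (rescale (-1) (1 + 2 * squareSeries)) := by
  have key : coeff d (∑ k ∈ range n, (-1 : ℤ⟦X⟧) ^ (k + 1) * X ^ ((k + 1) ^ 2)) =
      coeff d (rescale (-1) squareSeries) := by
    have hc (k : ℕ) : (-1 : ℤ⟦X⟧) ^ (k + 1) = C ((-1) ^ (k + 1)) := by simp
    rw [map_sum, coeff_rescale, squareSeries, coeff_mk]
    simp only [hc, coeff_C_mul, coeff_X_pow]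
    split_ifs with hd
    · obtain ⟨hd0, r, rfl⟩ := hd
      obtain ⟨r, rfl⟩ : ∃ s, r = s + 1 := ⟨r - 1, by have := Nat.pos_of_mul_pos_right hd0; omega⟩
      rw [sum_eq_single r]
      · have : (-1 : ℤ) ^ ((r + 1) * (r + 1)) = (-1) ^ (r + 1) := by
          rcases Nat.even_or_odd (r + 1) with h | h
          · rw [h.neg_one_pow, (h.mul_left _).neg_one_pow]
          · rw [h.neg_one_pow, (h.mul h).neg_one_pow]
        simp [this, sq]
      · intro b _ hb
        rw [if_neg, mul_zero]
        intro h
        rw [sq, Nat.mul_self_inj] at h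
        omega
      · intro hr
        rw [mem_range] at hr
        nlinarith
    · rw [mul_zero]
      refine sum_eq_zero fun k _ ↦ ?_
      rw [if_neg, mul_zero]
      rintro rfl
      exact hd ⟨by positivity, ⟨k + 1, sq _⟩⟩
  have h2 : (2 : ℤ⟦X⟧) = C 2 := by simp
  have hr : rescale (-1) (1 + 2 * squareSeries) = 1 + 2 * rescale (-1) squareSeries := by
    rw [map_add, map_mul, map_one, map_ofNat]
  rw [hr, map_add, map_add, h2, coeff_C_mul, coeff_C_mul, key]

open scoped PowerSeries.WithPiTopology in
open Filter Topology in
/-- The generating function of overpartitions is the inverse of `φ(-q)`: Euler's products for the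
two kinds of partitions give `∏ (1 + qⁱ) / (1 - qⁱ)`, and `gauss_dvd` passes to the limit. -/
lemma overpartitionSeries_mul :
    overpartitionSeries * rescale (-1) (1 + 2 * squareSeries) = 1 := by
  set D : ℤ⟦X⟧ := PowerSeries.mk fun n ↦ (#(Nat.Partition.distincts n) : ℤ) with hD
  set L : ℤ⟦X⟧ := PowerSeries.mk fun n ↦ (Fintype.card (Nat.Partition n) : ℤ) with hL
  have hP : overpartitionSeries = D * L := by
    ext n
    rw [coeff_mul, Finset.Nat.sum_antidiagonal_eq_sum_range_succ
      (fun i j ↦ coeff i D * coeff j L)]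
    simp [overpartitionSeries, overpartition, hD, hL]
  have h1 : HasProd (fun i ↦ (1 : ℤ⟦X⟧) + X ^ (i + 1)) D := by
    have := Nat.Partition.hasProd_powerSeriesMk_card_countRestricted ℤ (m := 2) (by norm_num)
    simpa [sum_range_succ, Nat.Partition.countRestricted_two] using this
  have h2 : HasProd (fun i ↦ ∑' j : ℕ, (X : ℤ⟦X⟧) ^ ((i + 1) * j)) L := by
    have := Nat.Partition.hasProd_powerSeriesMk_card_restricted ℤ (fun _ ↦ True)
    simpa [Nat.Partition.restricted] using this
  have h3 : HasProd (fun i ↦ (1 : ℤ⟦X⟧) - X ^ (i + 1)) (∏' i, (1 - X ^ (i + 1))) :=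
    (WithPiTopology.multipliable_one_sub_X_pow ℤ).hasProd
  set B : ℤ⟦X⟧ := ∏' i, (1 - X ^ (i + 1))
  have h4 : L * B = 1 := by
    refine (h2.mul h3).unique ?_
    convert hasProd_one with i
    simp_rw [pow_mul]
    exact WithPiTopology.tsum_pow_mul_one_sub_of_constantCoeff_eq_zero (by simp)
  have t1 := h1.tendsto_prod_nat
  have t3 := h3.tendsto_prod_nat
  have t2 : Tendsto (fun n ↦ (1 : ℤ⟦X⟧) + 2 * ∑ k ∈ range n, (-1) ^ (k + 1) * X ^ ((k + 1) ^ 2))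
      atTop (𝓝 (rescale (-1) (1 + 2 * squareSeries))) := by
    rw [WithPiTopology.tendsto_iff_coeff_tendsto]
    refine fun d ↦ tendsto_atTop_of_eventually_const (i₀ := d) fun n hn ↦ ?_
    exact coeff_theta_partial d n hn
  have t4 : Tendsto (fun n ↦ ((1 : ℤ⟦X⟧) + 2 * ∑ k ∈ range n, (-1) ^ (k + 1) * X ^ ((k + 1) ^ 2)) *
        (∏ i ∈ range n, (1 + X ^ (i + 1))) - ∏ i ∈ range n, (1 - X ^ (i + 1))) atTop (𝓝 0) := by
    rw [WithPiTopology.tendsto_iff_coeff_tendsto]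
    refine fun d ↦ tendsto_atTop_of_eventually_const (i₀ := d) fun n hn ↦ ?_
    rw [map_zero]
    exact X_pow_dvd_iff.mp (gauss_dvd n) d (by omega)
  have h5 := tendsto_nhds_unique ((t2.mul t1).sub t3) t4
  rw [hP]
  linear_combination L * h5 + h4

/-! ### Power series supported on a residue class -/

/-- The exponents occurring in `f` all lie in the residue class `r` modulo `m`. -/
def SupportedOn (m : ℕ) (r : ZMod m) (f : ℤ⟦X⟧) : Prop :=
  ∀ n : ℕ, coeff n f ≠ 0 → (n : ZMod m) = r

namespace SupportedOn

variable {m : ℕ} {r s : ZMod m} {f g : ℤ⟦X⟧}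

lemma add (hf : SupportedOn m r f) (hg : SupportedOn m r g) : SupportedOn m r (f + g) := by
  intro n hn
  by_contra h
  refine hn ?_
  rw [map_add, not_not.mp (mt (hf n) h), not_not.mp (mt (hg n) h), add_zero]

lemma mul (hf : SupportedOn m r f) (hg : SupportedOn m s g) : SupportedOn m (r + s) (f * g) := by
  intro n hn
  rw [coeff_mul] at hn
  obtain ⟨⟨i, j⟩, hij, hne⟩ := exists_ne_zero_of_sum_ne_zero hn
  rw [← mem_antidiagonal.mp hij, Nat.cast_add, hf i (left_ne_zero_of_mul hne),
    hg j (right_ne_zero_of_mul hne)]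

lemma pow (hf : SupportedOn m r f) (k : ℕ) : SupportedOn m (k * r) (f ^ k) := by
  induction k with
  | zero =>
    intro n hn
    rw [pow_zero, coeff_one] at hn
    simp [show n = 0 by by_contra h; simp [h] at hn]
  | succ k ih =>
    rw [pow_succ, Nat.cast_succ, add_one_mul]
    exact ih.mul hf

lemma coeff_eq_zero (hf : SupportedOn m r f) {n : ℕ} (h : (n : ZMod m) ≠ r) : coeff n f = 0 :=
  not_not.mp (mt (hf n) h)

end SupportedOn

/-- The part of `f` with exponents in the residue class `r` modulo `m`. -/
noncomputable def residuePart (m : ℕ) (r : ZMod m) (f : ℤ⟦X⟧) : ℤ⟦X⟧ :=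
  PowerSeries.mk fun n ↦ if (n : ZMod m) = r then coeff n f else 0

lemma supportedOn_residuePart (m : ℕ) (r : ZMod m) (f : ℤ⟦X⟧) :
    SupportedOn m r (residuePart m r f) := by
  intro n hn
  by_contra h
  simp [residuePart, h] at hn

lemma eq_residuePart_add {m : ℕ} {r s : ZMod m} (hrs : r ≠ s) {f : ℤ⟦X⟧}
    (h : ∀ n : ℕ, coeff n f ≠ 0 → (n : ZMod m) = r ∨ (n : ZMod m) = s) :
    f = residuePart m r f + residuePart m s f := by
  ext n
  simp only [residuePart, map_add, coeff_mk]
  by_cases h0 : coeff n f = 0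
  · simp [h0]
  · rcases h n h0 with h | h <;> simp [h, hrs, hrs.symm]

/-! ### Dissection of the square series -/

/-- `∑_{k ≥ 1} q^((2k)²)`. -/
noncomputable def evenSquares : ℤ⟦X⟧ := expand 4 (by norm_num) squareSeries

/-- `∑_{k odd} q^(k²)`. -/
noncomputable def oddSquares : ℤ⟦X⟧ := squareSeries - evenSquares

lemma coeff_evenSquares (n : ℕ) :
    coeff n evenSquares = if 4 ∣ n then coeff n squareSeries else 0 := by
  rw [evenSquares, coeff_expand]
  split_ifs with h
  · obtain ⟨m, rfl⟩ := h
    have h1 : IsSquare (4 * m) ↔ IsSquare m := by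
      constructor
      · rintro ⟨r, hr⟩
        obtain ⟨k, rfl⟩ : 2 ∣ r := by
          have : 2 ∣ r * r := ⟨2 * m, by omega⟩
          rcases Nat.prime_two.dvd_mul.mp this with h | h <;> exact h
        exact ⟨k, by nlinarith⟩
      · rintro ⟨r, rfl⟩
        exact ⟨2 * r, by ring⟩
    simp [squareSeries, h1]
  · rfl

lemma exists_of_coeff_squareSeries {n : ℕ} (h : coeff n squareSeries ≠ 0) : ∃ k, n = k ^ 2 := by
  rw [squareSeries, coeff_mk, ne_eq, ite_eq_right_iff, not_forall] at h
  obtain ⟨⟨_, k, hk⟩, _⟩ := h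
  exact ⟨k, hk.trans (sq k).symm⟩

lemma exists_of_coeff_evenSquares {n : ℕ} (h : coeff n evenSquares ≠ 0) :
    ∃ k, n = (2 * k) ^ 2 := by
  rw [evenSquares, coeff_expand] at h
  split_ifs at h with hn
  · obtain ⟨m, rfl⟩ := hn
    rw [Nat.mul_div_cancel_left _ (by norm_num)] at h
    obtain ⟨k, rfl⟩ := exists_of_coeff_squareSeries h
    exact ⟨k, by ring⟩
  · exact absurd rfl h

lemma exists_of_coeff_oddSquares {n : ℕ} (h : coeff n oddSquares ≠ 0) :
    ∃ k, n = (2 * k + 1) ^ 2 := by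
  rw [oddSquares, map_sub, coeff_evenSquares] at h
  split_ifs at h with hn
  · exact absurd (sub_self _) h
  · rw [sub_zero] at h
    obtain ⟨r, rfl⟩ := exists_of_coeff_squareSeries h
    rcases Nat.even_or_odd' r with ⟨k, rfl | rfl⟩
    · exact absurd ⟨k ^ 2, by ring⟩ hn
    · exact ⟨k, rfl⟩

lemma evenSquares_residue (n : ℕ) (h : coeff n evenSquares ≠ 0) :
    (n : ZMod 16) = 0 ∨ (n : ZMod 16) = 4 := by
  obtain ⟨k, rfl⟩ := exists_of_coeff_evenSquares h
  push_cast
  generalize (k : ZMod 16) = a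
  revert a; decide

lemma oddSquares_residue (n : ℕ) (h : coeff n oddSquares ≠ 0) :
    (n : ZMod 16) = 1 ∨ (n : ZMod 16) = 9 := by
  obtain ⟨k, rfl⟩ := exists_of_coeff_oddSquares h
  push_cast
  generalize (k : ZMod 16) = a
  revert a; decide

lemma supportedOn_oddSquares : SupportedOn 4 1 oddSquares := by
  intro n h
  obtain ⟨k, rfl⟩ := exists_of_coeff_oddSquares h
  push_cast
  generalize (k : ZMod 4) = a
  revert a; decide

lemma coeff_intCast_mul (c : ℤ) (n : ℕ) (f : ℤ⟦X⟧) :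
    coeff n ((c : ℤ⟦X⟧) * f) = c * coeff n f := by
  rw [← coeff_C_mul]; simp

/-- Writing `A`, `B` for the parts of the odd square series with exponents `1`, `9` modulo `16`, the
terms of `(A + B)⁴` with exponents `12` modulo `16` are `4 (A³B + AB³)`, the others having exponents
`4` modulo `16`. Split the even square series as `E = U + V`, with exponents `0` and `4`, and expand
`(1 + 2E)³ = 1 + 6E + 12E² + 8E³`. The factor `4` together with `6` or `12`, or the cross term `2UV`
of `E²` together with `12`, makes each contribution to an exponent divisible by `16` a multiple of
`8`. -/
lemma eight_dvd_coeff_oddSquares_pow_four_mul (k : ℕ) :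
    (8 : ℤ) ∣ coeff (16 * k) (oddSquares ^ 4 * (1 + 2 * evenSquares) ^ 3) := by
  have hE := eq_residuePart_add (by decide) evenSquares_residue
  have hO := eq_residuePart_add (by decide) oddSquares_residue
  have sU := supportedOn_residuePart 16 0 evenSquares
  have sV := supportedOn_residuePart 16 4 evenSquares
  have sA := supportedOn_residuePart 16 1 oddSquares
  have sB := supportedOn_residuePart 16 9 oddSquares
  set U := residuePart 16 0 evenSquares
  set V := residuePart 16 4 evenSquares
  set A := residuePart 16 1 oddSquares
  set B := residuePart 16 9 oddSquares
  have h16 : ((16 * k : ℕ) : ZMod 16) = 0 := by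
    rw [Nat.cast_mul, show ((16 : ℕ) : ZMod 16) = 0 from by decide, zero_mul]
  have vanish {r : ZMod 16} {f : ℤ⟦X⟧} (hf : SupportedOn 16 r f) (hr : 0 ≠ r) :
      coeff (16 * k) f = 0 := hf.coeff_eq_zero (by rwa [h16])
  have a1 := vanish (sA.pow 4) (by decide)
  have a2 := vanish ((sA.pow 2).mul (sB.pow 2)) (by decide)
  have a3 := vanish (sB.pow 4) (by decide)
  have a4 := vanish ((sA.pow 3).mul sB) (by decide)
  have a5 := vanish (sA.mul (sB.pow 3)) (by decide)
  have b1 := vanish ((sA.pow 4).mul sU) (by decide)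
  have b2 := vanish (((sA.pow 2).mul (sB.pow 2)).mul sU) (by decide)
  have b3 := vanish ((sB.pow 4).mul sU) (by decide)
  have c1 := vanish ((sA.pow 4).mul sV) (by decide)
  have c2 := vanish (((sA.pow 2).mul (sB.pow 2)).mul sV) (by decide)
  have c3 := vanish ((sB.pow 4).mul sV) (by decide)
  have d1 := vanish ((sA.pow 4).mul (sU.pow 2)) (by decide)
  have d2 := vanish (((sA.pow 2).mul (sB.pow 2)).mul (sU.pow 2)) (by decide)
  have d3 := vanish ((sB.pow 4).mul (sU.pow 2)) (by decide)
  have e1 := vanish ((sA.pow 4).mul (sV.pow 2)) (by decide)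
  have e2 := vanish (((sA.pow 2).mul (sB.pow 2)).mul (sV.pow 2)) (by decide)
  have e3 := vanish ((sB.pow 4).mul (sV.pow 2)) (by decide)
  have key : oddSquares ^ 4 * (1 + 2 * evenSquares) ^ 3 =
      A ^ 4 + (6 : ℤ) * (A ^ 2 * B ^ 2) + B ^ 4 + (4 : ℤ) * (A ^ 3 * B) + (4 : ℤ) * (A * B ^ 3)
      + (6 : ℤ) * (A ^ 4 * U) + (36 : ℤ) * (A ^ 2 * B ^ 2 * U) + (6 : ℤ) * (B ^ 4 * U)
      + (6 : ℤ) * (A ^ 4 * V) + (36 : ℤ) * (A ^ 2 * B ^ 2 * V) + (6 : ℤ) * (B ^ 4 * V)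
      + (12 : ℤ) * (A ^ 4 * U ^ 2) + (72 : ℤ) * (A ^ 2 * B ^ 2 * U ^ 2)
      + (12 : ℤ) * (B ^ 4 * U ^ 2)
      + (12 : ℤ) * (A ^ 4 * V ^ 2) + (72 : ℤ) * (A ^ 2 * B ^ 2 * V ^ 2)
      + (12 : ℤ) * (B ^ 4 * V ^ 2)
      + (8 : ℤ) * (3 * (A ^ 3 * B + A * B ^ 3) * (U + V)
        + 6 * (A ^ 3 * B + A * B ^ 3) * (U + V) ^ 2
        + 3 * (A ^ 4 + 6 * A ^ 2 * B ^ 2 + B ^ 4) * (U * V)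
        + (A + B) ^ 4 * (U + V) ^ 3) := by
    rw [hE, hO]
    push_cast
    ring
  rw [key]
  simp only [map_add, coeff_intCast_mul, a1, a2, a3, a4, a5, b1, b2, b3, c1, c2, c3, d1, d2, d3,
    e1, e2, e3, mul_zero, zero_add]
  exact dvd_mul_right _ _

/-- Iterating `Q = P - 2 O P Q`, with `P = Q(q⁴)` and `O` the odd square series, expands `Q` in
powers of `O`; modulo `128` the series stops at `O⁶`. At exponents divisible by `16` only `O⁰` and
`O⁴` can contribute, and `P⁵ ≡ (1 + 2E)³` modulo `16` because `P (1 + 2E) = 1` and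
`(1 + 2E)⁸ ≡ 1` modulo `16`, `E` being the even square series. -/
lemma coeff_modEq {Q : ℤ⟦X⟧} (hQ : Q * (1 + 2 * squareSeries) = 1) (k : ℕ) :
    coeff (16 * k) Q ≡ coeff (4 * k) Q [ZMOD 128] := by
  set P := expand 4 (by norm_num) Q with hP
  have hcP : coeff (16 * k) P = coeff (4 * k) Q := by
    rw [show 16 * k = 4 * (4 * k) by ring, hP, coeff_expand_mul]
  have hPE : P * (1 + 2 * evenSquares) = 1 := by
    have := congrArg (expand 4 (by norm_num)) hQ
    rwa [map_mul, map_add, map_mul, map_one, map_ofNat] at this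
  have sP : SupportedOn 4 0 P := by
    intro n hn
    rw [hP, coeff_expand] at hn
    split_ifs at hn with h
    · exact (ZMod.natCast_eq_zero_iff n 4).mpr h
    · exact absurd rfl hn
  have hQO : Q * (1 + 2 * evenSquares + 2 * oddSquares) = 1 := by
    rw [oddSquares]; linear_combination hQ
  have sO := supportedOn_oddSquares
  have hd := eight_dvd_coeff_oddSquares_pow_four_mul k
  rw [← hcP]
  set O := oddSquares
  set E := evenSquares
  have step : Q = P - 2 * O * P * Q := by
    linear_combination P * hQO - Q * hPE
  have h4 : ((16 * k : ℕ) : ZMod 4) = 0 := by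
    rw [Nat.cast_mul, show ((16 : ℕ) : ZMod 4) = 0 from by decide, zero_mul]
  have vanish {r : ZMod 4} {f : ℤ⟦X⟧} (hf : SupportedOn 4 r f) (hr : 0 ≠ r) :
      coeff (16 * k) f = 0 := hf.coeff_eq_zero (by rwa [h4])
  have v1 := vanish (sO.mul (sP.pow 2)) (by decide)
  have v2 := vanish ((sO.pow 2).mul (sP.pow 3)) (by decide)
  have v3 := vanish ((sO.pow 3).mul (sP.pow 4)) (by decide)
  have v5 := vanish ((sO.pow 5).mul (sP.pow 6)) (by decide)
  have v6 := vanish ((sO.pow 6).mul (sP.pow 7)) (by decide)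
  -- `16 * Y = (1 + 2 * E) ^ 8 - 1`
  set Y := E + 7 * E ^ 2 + 28 * E ^ 3 + 70 * E ^ 4 + 112 * E ^ 5 + 112 * E ^ 6 + 64 * E ^ 7
    + 16 * E ^ 8 with hY
  have hP5 : P ^ 5 = (1 + 2 * E) ^ 3 - 16 * (Y * P ^ 5) := by
    have h5 : P ^ 5 * (1 + 2 * E) ^ 5 = 1 := by rw [← mul_pow, hPE, one_pow]
    linear_combination (1 + 2 * E) ^ 3 * h5 + 16 * P ^ 5 * hY
  have expansion : Q = P + (-2 : ℤ) * (O * P ^ 2) + (4 : ℤ) * (O ^ 2 * P ^ 3)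
      + (-8 : ℤ) * (O ^ 3 * P ^ 4) + (16 : ℤ) * (O ^ 4 * (1 + 2 * E) ^ 3)
      + (-32 : ℤ) * (O ^ 5 * P ^ 6) + (64 : ℤ) * (O ^ 6 * P ^ 7)
      + (128 : ℤ) * (-2 * O ^ 4 * Y * P ^ 5 - O ^ 7 * P ^ 7 * Q) := by
    push_cast
    linear_combination (1 - 2 * O * P + 4 * O ^ 2 * P ^ 2 - 8 * O ^ 3 * P ^ 3
      + 16 * O ^ 4 * P ^ 4 - 32 * O ^ 5 * P ^ 5 + 64 * O ^ 6 * P ^ 6) * step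
      + 16 * O ^ 4 * hP5
  have hc := congrArg (coeff (16 * k)) expansion
  simp only [map_add, coeff_intCast_mul, v1, v2, v3, v5, v6, mul_zero, add_zero] at hc
  obtain ⟨z, hz⟩ := hd
  rw [hz] at hc
  rw [hc]
  refine (Int.modEq_iff_dvd.mpr ?_).symm
  exact ⟨z + coeff (16 * k) (-2 * O ^ 4 * Y * P ^ 5 - O ^ 7 * P ^ 7 * Q), by ring⟩

theorem overpartition_four_mul_mod_128 (n : ℕ) (hn : n % 4 = 0) :
    (overpartition (4 * n) : ℤ) ≡ (-1) ^ n * (overpartition n : ℤ) [ZMOD 128] := by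
  obtain ⟨k, rfl⟩ := Nat.dvd_of_mod_eq_zero hn
  have hQ : rescale (-1) overpartitionSeries * (1 + 2 * squareSeries) = 1 := by
    have := congrArg (rescale (-1)) overpartitionSeries_mul
    rwa [map_mul, map_one, rescale_rescale, neg_one_mul, neg_neg, rescale_one, RingHom.id_apply]
      at this
  have h := coeff_modEq hQ k
  have h1 : (-1 : ℤ) ^ (4 * k) = 1 := by rw [pow_mul]; norm_num
  have h2 : (-1 : ℤ) ^ (16 * k) = 1 := by rw [pow_mul]; norm_num
  rw [coeff_rescale, coeff_rescale, h1, h2, overpartitionSeries, coeff_mk, coeff_mk, one_mul,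
    one_mul] at h
  rw [h1, one_mul, ← mul_assoc]
  exact h
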